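/- arXiv:1502.01163 — 5 statements merged into one kernel-verified Lean document; each statement's English description precedes it below -/
import Mathlib

section
/- Let G be a group generated by a finite symmetric set S = {g_1^{±1},…,g_k^{±1}} of homeomorphisms of a compact metric space (X,d), acting continuously on X. If the group action satisfies the specification property, then every generator g ∈ S of infinite order (i.e. g^n ≠ id for all n ≥ 1), viewed as a single continuous map g : X → X, satisfies Bowen's specification property. -/
/-!
Word-length balls are finite because `S` is finite, and `m ↦ g ^ m` is injective on `ℤ` because `g`
has infinite order. Hence only finitely many powers of `g` have word length at most `p`, and there
is an `N` such that `|g ^ m| > p` as soon as `|m| ≥ N` (`exists_forall_lt_wordLength_zpow`).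

Given orbit segments of lengths `n i` with gaps at least `N`, starting at the times
`s i = ∑ l < i, (n l + q l)`, the sets `Λ i = {g ^ (j + s i) | j ≤ n i}` are therefore pairwise at
`d_G`-distance greater than `p`. The group specification property, applied to these sets and to the
points `g ^ (-s i) • y i`, yields the shadowing point required by Bowen's property.
-/


open Filter MeasureTheory Topology
open scoped Classical

/-- Word length of a group element with respect to a finite symmetric generating set `S`:
`|g| = min {n ≥ 1 : g is a product of n elements of S}`, with `|1| = 0`. -/
noncomputable def wordLength {G : Type*} [Group G] (S : Finset G) (g : G) : ℕ :=
  if g = 1 then 0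
  else sInf {n : ℕ | ∃ l : List G, l.length = n ∧ (∀ a ∈ l, a ∈ S) ∧ l.prod = g}

/-- Specification property (à la Ruelle) for the action `act` of a group `G`, generated by the
finite symmetric set `S`, on a metric space: finitely many finite subsets of `G` that are
pairwise at `d_G`-distance `> p(δ)` (where `d_G(a,b) = wordLength S (a⁻¹ * b)`) can be
`δ`-shadowed simultaneously by the orbit of a single point. -/
def GroupSpec {G : Type*} [Group G] {Y : Type*} [MetricSpace Y] (S : Finset G)
    (act : G → Y → Y) : Prop :=
  ∀ δ : ℝ, 0 < δ → ∃ p : ℕ, 0 < p ∧ ∀ (k : ℕ) (Λ : Fin k → Finset G) (x : Fin k → Y),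
    (∀ i j, i ≠ j → ∀ a ∈ Λ i, ∀ b ∈ Λ j, p < wordLength S (a⁻¹ * b)) →
    ∃ y : Y, ∀ i, ∀ a ∈ Λ i, dist (act a y) (act a (x i)) < δ

/-- Bowen's specification property for a single continuous map on a metric space. -/
def BowenSpec {Y : Type*} [MetricSpace Y] (f : Y → Y) : Prop :=
  ∀ δ : ℝ, 0 < δ → ∃ p : ℕ, 0 < p ∧
    ∀ (k : ℕ) (y : Fin (k + 1) → Y) (n q : Fin (k + 1) → ℕ),
      (∀ i, p ≤ q i) → ∃ z : Y, ∀ i : Fin (k + 1), ∀ j ≤ n i,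
        dist (f^[j + ∑ l ∈ Finset.univ.filter (fun l => l < i), (n l + q l)] z)
          (f^[j] (y i)) ≤ δ

/-- A word-length ball is finite. Generation is needed: an element that is not a product of elements
of `S` would have word length `sInf ∅ = 0`. -/
theorem finite_setOf_wordLength_le {G : Type*} [Group G] (S : Finset G)
    (hsym : ∀ a ∈ S, a⁻¹ ∈ S) (hgen : Subgroup.closure (S : Set G) = ⊤) (p : ℕ) :
    {x : G | wordLength S x ≤ p}.Finite := by
  refine (((List.finite_length_le S p).image
    fun l : List S => (l.map Subtype.val).prod)).subset ?_
  intro x hx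
  simp only [Set.mem_ofPred_eq, wordLength] at hx
  split_ifs at hx with h
  · exact ⟨[], by simp, by simp [h]⟩
  · have hne : {n : ℕ | ∃ l : List G, l.length = n ∧ (∀ a ∈ l, a ∈ S) ∧ l.prod = x}.Nonempty := by
      obtain ⟨l, hl, hp⟩ := Submonoid.exists_list_of_mem_closure
        (show x ∈ Submonoid.closure ((S : Set G) ∪ (S : Set G)⁻¹) by
          rw [← Subgroup.closure_toSubmonoid, hgen]; trivial)
      refine ⟨l.length, l, rfl, fun a ha => ?_, hp⟩
      rcases hl a ha with h | h
      · exact h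
      · simpa using hsym _ h
    obtain ⟨l, hlen, hl, hp⟩ := Nat.sInf_mem hne
    lift l to List S using hl
    exact ⟨l, by simp only [List.length_map] at hlen; simpa [hlen] using hx, hp⟩

/-- Large powers, of either sign, of an element of infinite order have large word length. -/
theorem exists_forall_lt_wordLength_zpow {G : Type*} [Group G] (S : Finset G)
    (hsym : ∀ a ∈ S, a⁻¹ ∈ S) (hgen : Subgroup.closure (S : Set G) = ⊤)
    (g : G) (hord : ∀ n : ℕ, 1 ≤ n → g ^ n ≠ 1) (p : ℕ) :
    ∃ N : ℕ, 0 < N ∧ ∀ m : ℤ, N ≤ m.natAbs → p < wordLength S (g ^ m) := by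
  have hinj : Function.Injective fun m : ℤ => g ^ m :=
    injective_zpow_iff_not_isOfFinOrder.2 fun h => by
      obtain ⟨n, hn, h1⟩ := isOfFinOrder_iff_pow_eq_one.1 h
      exact hord n hn h1
  have hfin : {m : ℤ | wordLength S (g ^ m) ≤ p}.Finite :=
    (finite_setOf_wordLength_le S hsym hgen p).preimage hinj.injOn
  obtain ⟨B, hB⟩ := (hfin.image Int.natAbs).bddAbove
  refine ⟨B + 1, B.succ_pos, fun m hm => ?_⟩
  by_contra! h
  have := hB ⟨m, h, rfl⟩
  omega

/-- If `i < j`, then segment `j` starts no earlier than the end of segment `i` plus the gap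
following it. -/
theorem sum_filter_lt_add_le {k : ℕ} (f : Fin k → ℕ) {i j : Fin k} (hij : i < j) :
    ∑ l ∈ Finset.univ.filter (fun l => l < i), f l + f i
      ≤ ∑ l ∈ Finset.univ.filter (fun l => l < j), f l := by
  rw [add_comm, ← Finset.sum_insert (by simp)]
  refine Finset.sum_le_sum_of_subset fun l hl => ?_
  simp only [Finset.mem_insert, Finset.mem_filter, Finset.mem_univ, true_and] at hl ⊢
  rcases hl with rfl | hl
  · exact hij
  · exact hl.trans hij

/-- If a continuous action of a finitely generated group of homeomorphisms of
a compact metric space satisfies the specification property, then every generator of infinite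
order satisfies Bowen's specification property. -/
theorem generator_specification_of_group_specification
    {G : Type*} [Group G] {X : Type*} [MetricSpace X] [CompactSpace X]
    [MulAction G X] (hcont : ∀ g : G, Continuous fun x : X => g • x)
    (S : Finset G) (hsym : ∀ a ∈ S, a⁻¹ ∈ S)
    (hgen : Subgroup.closure (S : Set G) = ⊤)
    (hspec : GroupSpec S fun g (x : X) => g • x)
    (g : G) (hgS : g ∈ S) (hord : ∀ n : ℕ, 1 ≤ n → g ^ n ≠ 1) :
    BowenSpec fun x : X => g • x := by
  intro δ hδ
  obtain ⟨p, -, hp⟩ := hspec δ hδ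
  obtain ⟨N, hN, hlong⟩ := exists_forall_lt_wordLength_zpow S hsym hgen g hord p
  refine ⟨N, hN, fun k y n q hq => ?_⟩
  set s : Fin (k + 1) → ℕ :=
    fun i => ∑ l ∈ Finset.univ.filter (fun l => l < i), (n l + q l) with hs
  have hstep : ∀ i j, i < j → s i + (n i + q i) ≤ s j := fun i j hij =>
    sum_filter_lt_add_le (fun l => n l + q l) hij
  obtain ⟨z, hz⟩ := hp (k + 1)
    (fun i => (Finset.range (n i + 1)).image fun j => g ^ (j + s i))
    (fun i => (g ^ s i)⁻¹ • y i) (by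
      intro i j hij a ha b hb
      obtain ⟨u, hu, rfl⟩ := Finset.mem_image.1 ha
      obtain ⟨v, hv, rfl⟩ := Finset.mem_image.1 hb
      rw [Finset.mem_range] at hu hv
      have hpow : (g ^ (u + s i))⁻¹ * g ^ (v + s j)
          = g ^ (-((u + s i : ℕ) : ℤ) + ((v + s j : ℕ) : ℤ)) := by
        rw [zpow_add, zpow_neg, zpow_natCast, zpow_natCast]
      rw [hpow]
      apply hlong
      have := hq i
      have := hq j
      rcases lt_or_gt_of_ne hij with h | h
      · have := hstep i j h
        omega
      · have := hstep j i h
        omega)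
  refine ⟨z, fun i j hj => ?_⟩
  have h := hz i (g ^ (j + s i))
    (Finset.mem_image.2 ⟨j, Finset.mem_range.2 (Nat.lt_succ_of_le hj), rfl⟩)
  simp only [pow_add g j, smul_smul, mul_inv_cancel_right] at h
  rw [← pow_add] at h
  simp only [smul_iterate]
  exact h.le
end

section
/- Let (X,d) be a compact metric space and G_1 = {g_1,…,g_m} a finite set of continuous self-maps of X, each of which is a surjective local homeomorphism, generating a semigroup action. If the semigroup action satisfies the strong orbital specification property, then every point of X is an entropy point for the averaged (Bufetov) entropy: for every x ∈ X and every open neighbourhood U of x, h_top((G,G_1), cl(U)) = h_top((G,G_1), X). -/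
/-!
Fix `ε > 0` and a ball `B(x, δ) ⊆ U`, and let `p` be the gap given by specification at scale
`η = min δ (ε/4)`. Given a word `w`, a word `h` of length `p` and a `(w, ε)`-separated set
`F ⊆ X`, specification applied to the empty word at `x` and the word `w` at `y`, joined by `h`,
gives for each `y ∈ F` a point `z_y` with `d(z_y, x) < η` (so `z_y ∈ U`) whose image under `g_h`
is `η`-close to `y` in `d_w`. The points `z_y` are `(wh, ε/2)`-separated, whence
`s(w, X, ε) ≤ s(wh, U, ε/2)` (`maxSep_le_maxSep_append`). Averaging over `w` and `h` gives
`Z_n(X, ε) ≤ Z_{n+p}(U, ε/2)` (`bufZ_le_bufZ_add`), and the fixed shift `p` is invisible to the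
exponential growth rate (`limsup_div_le_limsup_div`), so the growth rate of `X` at scale `ε` is at
most that of `cl U` at scale `ε/2`. The reverse inequality at equal scales is monotonicity of
`s(w, ·, ε)` in the set.

Since entropies are real-valued suprema, the argument needs boundedness at a fixed scale: coding
orbits by a finite cover of `X` by `ε/2`-balls with at most `N` elements gives `s(w, E, ε) ≤ N ^ (|w| + 1)`
(`exists_card_le_pow`), so every `limsup` is a genuine one. The supremum over `ε` may be infinite,
but then it is so for both sets, and the two real suprema take the same default value.
-/

open Filter MeasureTheory Topology
open scoped Classical

/-- Composition of the generators along a word `w = [i_n, …, i_1]` (rightmost letter applied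
first): `wcomp g w = g i_n ∘ … ∘ g i_1`.  The partial compositions `g_{w,ℓ}` are obtained as
`wcomp g s` for the suffixes `s <:+ w`. -/
def wcomp {m : ℕ} {X : Type*} (g : Fin m → X → X) : List (Fin m) → X → X
  | [] => id
  | i :: w => g i ∘ wcomp g w

/-- The dynamical distance `d_w(x,y) = max_{0 ≤ ℓ ≤ n} d(g_{w,ℓ} x, g_{w,ℓ} y)`, the partial
compositions `g_{w,ℓ}` being the compositions along the suffixes of `w`. -/
noncomputable def dynDist {m : ℕ} {X : Type*} [MetricSpace X] (g : Fin m → X → X)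
    (w : List (Fin m)) (x y : X) : ℝ :=
  ((w.tails).map fun s => dist (wcomp g s x) (wcomp g s y)).foldr max 0

/-- The concatenation `h_j ++ w_j ++ … ++ h_1 ++ w_1` of the first `j` blocks, so that
`wcomp g (precomp w h j) = g_{h_j} ∘ g_{w_j} ∘ … ∘ g_{h_1} ∘ g_{w_1}`. -/
def precomp {m : ℕ} (w h : ℕ → List (Fin m)) : ℕ → List (Fin m)
  | 0 => []
  | j + 1 => h j ++ w j ++ precomp w h j

/-- Strong orbital specification property for the semigroup action generated by
`g 0, …, g (m-1)`. -/
def StrongOrbitalSpec {m : ℕ} {X : Type*} [MetricSpace X] (g : Fin m → X → X) : Prop :=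
  ∀ ε : ℝ, 0 < ε → ∃ p : ℕ, ∀ (k : ℕ) (x : ℕ → X) (w h : ℕ → List (Fin m)),
    (∀ j, j + 1 < k → p ≤ (h j).length) →
    ∃ y : X, ∀ j < k, ∀ s, s <:+ w j →
      dist (wcomp g s (wcomp g (precomp w h j) y)) (wcomp g s (x j)) < ε

/-- Maximal cardinality of a `(w,n,ε)`-separated subset of `E` (separation meaning
`d_w(x,y) > ε` for distinct points). -/
noncomputable def maxSep {m : ℕ} {X : Type*} [MetricSpace X] (g : Fin m → X → X)
    (w : List (Fin m)) (ε : ℝ) (E : Set X) : ℕ :=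
  sSup {k : ℕ | ∃ F : Finset X, ↑F ⊆ E ∧
    (∀ x ∈ F, ∀ y ∈ F, x ≠ y → ε < dynDist g w x y) ∧ F.card = k}

/-- The averaged sum `Z_n((G,G₁),E,ε) = m^{-n} ∑_{|w|=n} s(w,n,E,ε)`. -/
noncomputable def bufZ {m : ℕ} {X : Type*} [MetricSpace X] (g : Fin m → X → X)
    (n : ℕ) (ε : ℝ) (E : Set X) : ℝ :=
  (1 / (m : ℝ) ^ n) * ∑ f : Fin n → Fin m, (maxSep g (List.ofFn f) ε E : ℝ)

/-- Averaged (Bufetov) topological entropy of the semigroup action on `E`: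
`lim_{ε→0} limsup_n (1/n) log Z_n`; by monotonicity in `ε` the limit as `ε → 0` is the
supremum over `ε > 0`. -/
noncomputable def bufEntropy {m : ℕ} {X : Type*} [MetricSpace X] (g : Fin m → X → X)
    (E : Set X) : ℝ :=
  ⨆ ε : {ε : ℝ // 0 < ε}, limsup (fun n : ℕ => Real.log (bufZ g n ε.1 E) / n) atTop

/-! ### Dynamical distances and separated sets -/

section Helpers

variable {m : ℕ} {X : Type*}

theorem wcomp_append (g : Fin m → X → X) (s h : List (Fin m)) (x : X) :
    wcomp g (s ++ h) x = wcomp g s (wcomp g h x) := by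
  induction s with
  | nil => rfl
  | cons i s ih => simp only [List.cons_append, wcomp, Function.comp_apply, ih]

theorem lt_foldr_max_iff {ε : ℝ} (hε : 0 ≤ ε) (l : List ℝ) :
    ε < l.foldr max 0 ↔ ∃ a ∈ l, ε < a := by
  induction l with
  | nil => simpa using hε
  | cons a l ih => simp [ih]

variable [MetricSpace X]

theorem lt_dynDist_iff (g : Fin m → X → X) (w : List (Fin m)) {ε : ℝ} (hε : 0 ≤ ε) (x y : X) :
    ε < dynDist g w x y ↔ ∃ s, s <:+ w ∧ ε < dist (wcomp g s x) (wcomp g s y) := by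
  rw [dynDist, lt_foldr_max_iff hε]
  simp

/-- The cardinality of a separated set grows at most exponentially in the length of the word: a
point of the set is determined by the `ε/2`-balls of a fixed finite cover visited by its orbit. -/
theorem exists_card_le_pow [CompactSpace X] (g : Fin m → X → X) {ε : ℝ} (hε : 0 < ε) :
    ∃ N : ℕ, 1 ≤ N ∧ ∀ (w : List (Fin m)) (F : Finset X),
      (∀ x ∈ F, ∀ y ∈ F, x ≠ y → ε < dynDist g w x y) → F.card ≤ N ^ (w.length + 1) := by
  obtain ⟨t, htfin, htcov⟩ := Metric.totallyBounded_iff.1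
    (isCompact_univ (X := X)).totallyBounded (ε / 2) (by positivity)
  have hc : ∀ x : X, ∃ y : t, dist x y < ε / 2 := by
    intro x
    have := htcov (Set.mem_univ x)
    simp only [Set.mem_iUnion, Metric.mem_ball] at this
    obtain ⟨y, hy, hxy⟩ := this
    exact ⟨⟨y, hy⟩, hxy⟩
  choose c hc using hc
  have : Fintype t := htfin.fintype
  refine ⟨Fintype.card t + 1, by omega, fun w F hF => ?_⟩
  let code : X → Fin (w.length + 1) → t := fun x i => c (wcomp g (w.drop i) x)
  have hinj : Set.InjOn code F := by
    intro x hx y hy hxy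
    by_contra hne
    obtain ⟨s, hs, hlt⟩ := (lt_dynDist_iff g w hε.le x y).1 (hF x hx y hy hne)
    have hcode : c (wcomp g s x) = c (wcomp g s y) := by
      have h1 := congrFun hxy ⟨w.length - s.length, by omega⟩
      simp only [code] at h1
      rwa [← List.suffix_iff_eq_drop.1 hs] at h1
    have h1 := hc (wcomp g s x)
    have h2 := hc (wcomp g s y)
    rw [hcode] at h1
    have := dist_triangle_right (wcomp g s x) (wcomp g s y) (c (wcomp g s y))
    linarith
  calc F.card ≤ (Finset.univ : Finset (Fin (w.length + 1) → t)).card :=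
        Finset.card_le_card_of_injOn code (fun _ _ => Finset.mem_coe.2 (Finset.mem_univ _)) hinj
    _ = Fintype.card t ^ (w.length + 1) := by simp
    _ ≤ (Fintype.card t + 1) ^ (w.length + 1) := Nat.pow_le_pow_left (Nat.le_succ _) _

/-- Averaging a comparison of `s(w, ·)` with `s(wh, ·)` over all words `w` of length `n` and `h` of
length `p`. -/
theorem bufZ_le_bufZ_add (hm : 0 < m) (g : Fin m → X → X) {ε ε' : ℝ} {E E' : Set X} {p : ℕ}
    (hp : ∀ w h : List (Fin m), h.length = p → maxSep g w ε E ≤ maxSep g (w ++ h) ε' E') (n : ℕ) :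
    bufZ g n ε E ≤ bufZ g (n + p) ε' E' := by
  have hm' : (0 : ℝ) < m := by exact_mod_cast hm
  rw [bufZ, bufZ, one_div_mul_eq_div, one_div_mul_eq_div, pow_add,
    div_le_div_iff₀ (by positivity) (by positivity)]
  have hsum : (m : ℝ) ^ p * ∑ f : Fin n → Fin m, (maxSep g (List.ofFn f) ε E : ℝ)
      ≤ ∑ f : Fin (n + p) → Fin m, (maxSep g (List.ofFn f) ε' E' : ℝ) := by
    rw [← (Fin.appendEquiv n p).sum_comp, Fintype.sum_prod_type, Finset.mul_sum]
    refine Finset.sum_le_sum fun a _ => ?_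
    calc (m : ℝ) ^ p * (maxSep g (List.ofFn a) ε E : ℝ)
        = ∑ _b : Fin p → Fin m, (maxSep g (List.ofFn a) ε E : ℝ) := by simp
      _ ≤ _ := Finset.sum_le_sum fun b _ => by
        have := hp (List.ofFn a) (List.ofFn b) (List.length_ofFn)
        rw [← List.ofFn_fin_append] at this
        exact_mod_cast this
  calc _ = (m : ℝ) ^ n *
        ((m : ℝ) ^ p * ∑ f : Fin n → Fin m, (maxSep g (List.ofFn f) ε E : ℝ)) := by ring
    _ ≤ (m : ℝ) ^ n * ∑ f : Fin (n + p) → Fin m, (maxSep g (List.ofFn f) ε' E' : ℝ) := by gcongr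
    _ = _ := by ring

variable [CompactSpace X]

theorem bddAbove_card_separated (g : Fin m → X → X) (w : List (Fin m)) {ε : ℝ} (hε : 0 < ε)
    (E : Set X) :
    BddAbove {k : ℕ | ∃ F : Finset X, ↑F ⊆ E ∧
      (∀ x ∈ F, ∀ y ∈ F, x ≠ y → ε < dynDist g w x y) ∧ F.card = k} := by
  obtain ⟨N, -, hN⟩ := exists_card_le_pow g hε
  refine ⟨N ^ (w.length + 1), ?_⟩
  rintro k ⟨F, -, hF, rfl⟩
  exact hN w F hF

theorem card_le_maxSep (g : Fin m → X → X) (w : List (Fin m)) {ε : ℝ} (hε : 0 < ε) {E : Set X}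
    (F : Finset X) (hFE : ↑F ⊆ E) (hF : ∀ x ∈ F, ∀ y ∈ F, x ≠ y → ε < dynDist g w x y) :
    F.card ≤ maxSep g w ε E :=
  le_csSup (bddAbove_card_separated g w hε E) ⟨F, hFE, hF, rfl⟩

theorem exists_card_eq_maxSep (g : Fin m → X → X) (w : List (Fin m)) {ε : ℝ} (hε : 0 < ε)
    (E : Set X) :
    ∃ F : Finset X, ↑F ⊆ E ∧ (∀ x ∈ F, ∀ y ∈ F, x ≠ y → ε < dynDist g w x y) ∧
      F.card = maxSep g w ε E := by
  have hne : {k : ℕ | ∃ F : Finset X, ↑F ⊆ E ∧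
      (∀ x ∈ F, ∀ y ∈ F, x ≠ y → ε < dynDist g w x y) ∧ F.card = k}.Nonempty := ⟨0, ∅, by simp⟩
  exact Nat.sSup_mem hne (bddAbove_card_separated g w hε E)

theorem maxSep_mono (g : Fin m → X → X) (w : List (Fin m)) {ε : ℝ} (hε : 0 < ε) {E E' : Set X}
    (h : E ⊆ E') : maxSep g w ε E ≤ maxSep g w ε E' := by
  obtain ⟨F, hFE, hF, hcard⟩ := exists_card_eq_maxSep g w hε E
  exact hcard ▸ card_le_maxSep g w hε F (hFE.trans h) hF

theorem one_le_maxSep (g : Fin m → X → X) (w : List (Fin m)) {ε : ℝ} (hε : 0 < ε) {E : Set X}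
    (hE : E.Nonempty) : 1 ≤ maxSep g w ε E := by
  obtain ⟨x, hx⟩ := hE
  have := card_le_maxSep g w hε {x} (E := E) (by simpa using hx)
    (by
      intro a ha b hb hab
      rw [Finset.mem_singleton] at ha hb
      exact absurd (ha.trans hb.symm) hab)
  simpa using this

/-! ### Separated sets inside an open set, by specification -/

/-- Transport of separated sets into `U` by specification: letting any word `h`
whose length is the specification gap act before `w` costs only half of the separation scale. -/
theorem maxSep_le_maxSep_append (g : Fin m → X → X) (hspec : StrongOrbitalSpec g) {x : X}
    {U : Set X} (hU : IsOpen U) (hx : x ∈ U) {ε : ℝ} (hε : 0 < ε) :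
    ∃ p : ℕ, ∀ w h : List (Fin m), h.length = p →
      maxSep g w ε Set.univ ≤ maxSep g (w ++ h) (ε / 2) U := by
  obtain ⟨δ, hδ, hball⟩ := Metric.isOpen_iff.1 hU x hx
  obtain ⟨p, hp⟩ := hspec (min δ (ε / 4)) (by positivity)
  refine ⟨p, fun w h hh => ?_⟩
  have hz : ∀ y : X, ∃ z ∈ U, ∀ s, s <:+ w →
      dist (wcomp g (s ++ h) z) (wcomp g s y) < ε / 4 := by
    intro y
    obtain ⟨z, hz⟩ := hp 2 (fun j => if j = 0 then x else y) (fun j => if j = 0 then [] else w)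
      (fun _ => h) (fun _ _ => hh.ge)
    refine ⟨z, hball ?_, fun s hs => ?_⟩
    · have := hz 0 (by norm_num) [] (by simp)
      simp only [wcomp, precomp, id] at this
      exact Metric.mem_ball.2 (this.trans_le (min_le_left _ _))
    · have := hz 1 (by norm_num) s (by simpa using hs)
      simp only [precomp, if_true, if_neg one_ne_zero, List.append_nil] at this
      rw [wcomp_append]
      exact this.trans_le (min_le_right _ _)
  choose z hzU hz using hz
  obtain ⟨F, -, hF, hcard⟩ := exists_card_eq_maxSep g w hε Set.univ
  have hsep : ∀ a ∈ F, ∀ b ∈ F, a ≠ b → ε / 2 < dynDist g (w ++ h) (z a) (z b) := by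
    intro a ha b hb hab
    obtain ⟨s, hs, hlt⟩ := (lt_dynDist_iff g w hε.le a b).1 (hF a ha b hb hab)
    refine (lt_dynDist_iff g (w ++ h) (by positivity) _ _).2
      ⟨s ++ h, (List.suffix_append_self_iff).2 hs, ?_⟩
    have h1 := hz a s hs
    have h2 := hz b s hs
    have h3 := dist_triangle4_left (wcomp g (s ++ h) (z a)) (wcomp g (s ++ h) (z b))
      (wcomp g s a) (wcomp g s b)
    linarith
  have hinj : Set.InjOn z F := by
    intro a ha b hb hab
    by_contra hne
    obtain ⟨s, -, hlt⟩ := (lt_dynDist_iff g (w ++ h) (by positivity) _ _).1 (hsep a ha b hb hne)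
    rw [hab, dist_self] at hlt
    linarith
  rw [← hcard, ← Finset.card_image_of_injOn hinj]
  refine card_le_maxSep g (w ++ h) (by positivity) _ ?_ ?_
  · rw [Finset.coe_image]
    rintro _ ⟨a, -, rfl⟩
    exact hzU a
  · intro a' ha' b' hb' hne
    obtain ⟨a, ha, rfl⟩ := Finset.mem_image.1 ha'
    obtain ⟨b, hb, rfl⟩ := Finset.mem_image.1 hb'
    exact hsep a ha b hb (fun h => hne (congrArg z h))

/-! ### The averaged sums and their growth rates -/

theorem bufZ_mono (g : Fin m → X → X) (n : ℕ) {ε : ℝ} (hε : 0 < ε) {E E' : Set X}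
    (h : E ⊆ E') : bufZ g n ε E ≤ bufZ g n ε E' := by
  unfold bufZ
  gcongr
  exact maxSep_mono g _ hε h

theorem one_le_bufZ (hm : 0 < m) (g : Fin m → X → X) (n : ℕ) {ε : ℝ} (hε : 0 < ε) {E : Set X}
    (hE : E.Nonempty) : 1 ≤ bufZ g n ε E := by
  have hm' : (0 : ℝ) < (m : ℝ) ^ n := by positivity
  rw [bufZ, one_div_mul_eq_div, le_div_iff₀ hm', one_mul]
  calc (m : ℝ) ^ n = ∑ _f : Fin n → Fin m, (1 : ℝ) := by simp
    _ ≤ _ := Finset.sum_le_sum fun f _ => by exact_mod_cast one_le_maxSep g _ hε hE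

theorem exists_bufZ_le_pow (hm : 0 < m) (g : Fin m → X → X) {ε : ℝ} (hε : 0 < ε) :
    ∃ N : ℝ, 1 ≤ N ∧ ∀ (n : ℕ) (E : Set X), bufZ g n ε E ≤ N ^ (n + 1) := by
  obtain ⟨N, hN1, hN⟩ := exists_card_le_pow g hε
  refine ⟨N, by exact_mod_cast hN1, fun n E => ?_⟩
  have hm' : (0 : ℝ) < (m : ℝ) ^ n := by positivity
  rw [bufZ, one_div_mul_eq_div, div_le_iff₀ hm']
  calc ∑ f : Fin n → Fin m, (maxSep g (List.ofFn f) ε E : ℝ)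
      ≤ ∑ _f : Fin n → Fin m, (N : ℝ) ^ (n + 1) := Finset.sum_le_sum fun f _ => by
        obtain ⟨F, -, hF, hcard⟩ := exists_card_eq_maxSep g (List.ofFn f) hε E
        have := hN _ F hF
        rw [hcard, List.length_ofFn] at this
        exact_mod_cast this
    _ = (N : ℝ) ^ (n + 1) * (m : ℝ) ^ n := by simp [mul_comm]

/-- At a fixed scale the normalized logarithms are bounded, also at `n = 0` where the quotient is
`0` by convention. -/
theorem exists_log_bufZ_div_mem_Icc (hm : 0 < m) (g : Fin m → X → X) {ε : ℝ} (hε : 0 < ε) :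
    ∃ K : ℝ, ∀ (n : ℕ) (E : Set X), E.Nonempty →
      Real.log (bufZ g n ε E) / n ∈ Set.Icc 0 K := by
  obtain ⟨N, hN1, hN⟩ := exists_bufZ_le_pow hm g hε
  have hlogN : 0 ≤ Real.log N := Real.log_nonneg hN1
  refine ⟨2 * Real.log N, fun n E hE => ?_⟩
  have h1 := one_le_bufZ hm g n hε hE
  refine ⟨div_nonneg (Real.log_nonneg h1) n.cast_nonneg, ?_⟩
  rcases Nat.eq_zero_or_pos n with rfl | hn
  · simpa using hlogN
  have hn' : (1 : ℝ) ≤ n := by exact_mod_cast hn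
  rw [div_le_iff₀ (by linarith)]
  have h2 := Real.log_le_log (by linarith) (hN n E)
  rw [Real.log_pow] at h2
  push_cast at h2
  nlinarith

end Helpers

/-- A bounded shift of the index does not change exponential growth rates. -/
theorem limsup_div_le_limsup_div {A B : ℕ → ℝ} {p : ℕ} {K : ℝ} (hAB : ∀ n, A n ≤ B (n + p))
    (hA : ∀ n, 0 ≤ A n / n) (hB : ∀ n, B n / n ∈ Set.Icc 0 K) :
    limsup (fun n : ℕ => A n / n) atTop ≤ limsup (fun n : ℕ => B n / n) atTop := by
  have hbdd : IsBoundedUnder (· ≤ ·) atTop fun n : ℕ => B n / n :=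
    isBoundedUnder_of ⟨K, fun n => (hB n).2⟩
  refine le_of_forall_pos_le_add fun e he => ?_
  refine limsup_le_of_le (isBoundedUnder_of ⟨0, hA⟩).isCoboundedUnder_le ?_
  have h1 : ∀ᶠ n : ℕ in atTop,
      B (n + p) / ((n + p : ℕ) : ℝ) < limsup (fun n : ℕ => B n / n) atTop + e / 2 :=
    (tendsto_add_atTop_nat p).eventually
      (eventually_lt_of_limsup_lt (lt_add_of_pos_right _ (half_pos he)) hbdd)
  have h2 : ∀ᶠ n : ℕ in atTop, K * p / (n : ℝ) < e / 2 :=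
    (tendsto_const_div_atTop_nhds_zero_nat (K * p)).eventually_lt_const (half_pos he)
  filter_upwards [h1, h2, eventually_gt_atTop 0] with n h1 h2 hn
  have hn' : (0 : ℝ) < n := by exact_mod_cast hn
  have hp0 : (0 : ℝ) ≤ p := p.cast_nonneg
  set b := B (n + p) / ((n + p : ℕ) : ℝ) with hb
  have hbK : b ≤ K := (hB (n + p)).2
  -- `B (n + p) / n = b + b * p / n`, where `b ≤ K`
  have h3 : A n / n ≤ b + K * p / n := by
    have h4 : B (n + p) = b * (n + p) := by
      rw [hb]
      push_cast
      field_simp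
    have h5 := hAB n
    rw [h4] at h5
    rw [div_le_iff₀ hn', add_mul, div_mul_cancel₀ _ hn'.ne']
    nlinarith
  linarith

/-- For a semigroup action generated by finitely many surjective local
homeomorphisms of a compact metric space satisfying the strong orbital specification property,
every point is an entropy point for the averaged (Bufetov) topological entropy. -/
theorem strong_specification_implies_every_point_is_bufetov_entropy_point
    {X : Type*} [MetricSpace X] [CompactSpace X]
    {m : ℕ} (g : Fin m → X → X)
    (hloc : ∀ i, IsLocalHomeomorph (g i)) (hsurj : ∀ i, Function.Surjective (g i))
    (hspec : StrongOrbitalSpec g) :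
    ∀ (x : X) (U : Set X), IsOpen U → x ∈ U →
      bufEntropy g (closure U) = bufEntropy g Set.univ := by
  intro x U hU hx
  rcases Nat.eq_zero_or_pos m with rfl | hm
  · -- Without generators there are no words of positive length, and the term `n = 0` is a
    -- quotient by `0`, so all terms vanish.
    have key : ∀ (E : Set X) (ε : ℝ),
        limsup (fun n : ℕ => Real.log (bufZ g n ε E) / n) atTop = 0 := by
      intro E ε
      have : (fun n : ℕ => Real.log (bufZ g n ε E) / n) = fun _ => 0 := by
        funext n
        cases n <;> simp [bufZ]
      rw [this]
      exact limsup_const 0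
    simp only [bufEntropy, key]
  have hE : (closure U).Nonempty := ⟨x, subset_closure hx⟩
  have hle : ∀ ε : {ε : ℝ // 0 < ε},
      limsup (fun n : ℕ => Real.log (bufZ g n ε.1 (closure U)) / n) atTop
        ≤ limsup (fun n : ℕ => Real.log (bufZ g n ε.1 Set.univ) / n) atTop := by
    rintro ⟨ε, hε⟩
    obtain ⟨K, hK⟩ := exists_log_bufZ_div_mem_Icc hm g hε
    refine limsup_div_le_limsup_div (p := 0) (fun n => ?_) (fun n => (hK n _ hE).1)
      (fun n => hK n _ ⟨x, Set.mem_univ x⟩)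
    exact Real.log_le_log (zero_lt_one.trans_le (one_le_bufZ hm g n hε hE))
      (bufZ_mono g n hε (Set.subset_univ _))
  have hge : ∀ ε : {ε : ℝ // 0 < ε},
      limsup (fun n : ℕ => Real.log (bufZ g n ε.1 Set.univ) / n) atTop
        ≤ limsup (fun n : ℕ => Real.log (bufZ g n (ε.1 / 2) (closure U)) / n) atTop := by
    rintro ⟨ε, hε⟩
    obtain ⟨p, hp⟩ := maxSep_le_maxSep_append g hspec hU hx hε
    obtain ⟨K, hK⟩ := exists_log_bufZ_div_mem_Icc hm g (half_pos hε)
    obtain ⟨_, hK'⟩ := exists_log_bufZ_div_mem_Icc hm g hε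
    refine limsup_div_le_limsup_div (p := p) (fun n => ?_) (fun n => (hK' n _ ⟨x, Set.mem_univ x⟩).1)
      (fun n => hK n _ hE)
    refine Real.log_le_log (zero_lt_one.trans_le (one_le_bufZ hm g n hε ⟨x, Set.mem_univ x⟩)) ?_
    exact bufZ_le_bufZ_add hm g (fun w h hh =>
      (hp w h hh).trans (maxSep_mono g _ (half_pos hε) subset_closure)) n
  unfold bufEntropy
  have : Nonempty {ε : ℝ // 0 < ε} := ⟨⟨1, one_pos⟩⟩
  by_cases hb : BddAbove (Set.range fun ε : {ε : ℝ // 0 < ε} =>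
      limsup (fun n : ℕ => Real.log (bufZ g n ε.1 (closure U)) / n) atTop)
  · have hb' : BddAbove (Set.range fun ε : {ε : ℝ // 0 < ε} =>
        limsup (fun n : ℕ => Real.log (bufZ g n ε.1 Set.univ) / n) atTop) := by
      obtain ⟨M, hM⟩ := hb
      refine ⟨M, ?_⟩
      rintro _ ⟨ε, rfl⟩
      exact (hge ε).trans (hM ⟨⟨ε.1 / 2, half_pos ε.2⟩, rfl⟩)
    exact le_antisymm (ciSup_mono hb' hle)
      (ciSup_le fun ε => (hge ε).trans (le_ciSup hb ⟨ε.1 / 2, half_pos ε.2⟩))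
  · -- Infinite entropy: both real suprema are unbounded, hence both equal `0`.
    have hb' : ¬ BddAbove (Set.range fun ε : {ε : ℝ // 0 < ε} =>
        limsup (fun n : ℕ => Real.log (bufZ g n ε.1 Set.univ) / n) atTop) := by
      rintro ⟨M, hM⟩
      refine hb ⟨M, ?_⟩
      rintro _ ⟨ε, rfl⟩
      exact (hle ε).trans (hM ⟨ε, rfl⟩)
    rw [Real.iSup_of_not_bddAbove hb, Real.iSup_of_not_bddAbove hb']
end

section
/- Let (X,d) be a compact metric space and let g_1,…,g_m be continuous self-maps of X such that each g_i is a surjective open map and there are common constants δ_0 > 0 and 0 < λ < 1 with d(g_i(x), g_i(y)) ≥ λ^{-1} d(x,y) whenever d(x,y) ≤ δ_0. Then there exists ε_0 > 0 such that for every 0 < ε ≤ ε_0, every x ∈ X and every word w over {1,…,m}, the image of the dynamical ball under the corresponding composition is exactly a metric ball: \underline{g}_w( B(x,w,ε) ) = { y ∈ X : d(y, \underline{g}_w(x)) ≤ ε }. -/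
/-!
The image of the dynamical ball is contained in the closed ball because `w` is a suffix of itself.
For the reverse inclusion, compactness makes the openness of each `g i` uniform: some radius `r`
works for all `i` and `x`, in the sense that every `v` within `r` of `g i x` has a preimage within
`δ₀` of `x` (`eventually_uniform_lift`). Expansion applies to this preimage and places it
within `lam * dist v (g i x) ≤ dist v (g i x)` of `x`. Thus for `ε ≤ r` every point within `ε` of
`g i x` lifts to a point within `ε` of `x`, and a point of the closed ball around `wcomp g w x` is
pulled back one letter at a time along the orbit of `x` (`exists_shadowing_preimage`).
-/

open Filter MeasureTheory Topology
open scoped Classical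

/-- A continuous open map of a compact metric space is uniformly open: for small `r`, points
within `r` of `f x` have preimages within `δ` of `x`, with `r` independent of `x`. -/
theorem eventually_uniform_lift {X : Type*} [MetricSpace X] [CompactSpace X] {f : X → X}
    (hf : Continuous f) (hopen : IsOpenMap f) {δ : ℝ} (hδ : 0 < δ) :
    ∀ᶠ r in 𝓝[>] (0 : ℝ), ∀ x y, dist y (f x) ≤ r → ∃ z, dist z x ≤ δ ∧ f z = y := by
  suffices h : ∀ᶠ r in 𝓝[>] (0 : ℝ), ∀ x ∈ (Set.univ : Set X), ∀ y, dist y (f x) ≤ r →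
      ∃ z, dist z x ≤ δ ∧ f z = y by simpa using h
  refine isCompact_univ.induction_on (p := fun s : Set X => ∀ᶠ r in 𝓝[>] (0 : ℝ), ∀ x ∈ s, ∀ y,
    dist y (f x) ≤ r → ∃ z, dist z x ≤ δ ∧ f z = y) (by simp) ?_ ?_ ?_
  · exact fun s t hst ht => ht.mono fun r h x hx => h x (hst hx)
  · intro s t hs ht
    filter_upwards [hs, ht] with r h₁ h₂ x hx
    exact hx.elim (h₁ x) (h₂ x)
  · intro x _
    obtain ⟨ρ, hρ, hsub⟩ := Metric.mem_nhds_iff.1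
      (hopen.image_mem_nhds (Metric.ball_mem_nhds x (half_pos hδ)))
    -- Near `x`, halving both radii leaves room to move the centre from `x` to `x'`.
    refine ⟨Metric.ball x (δ / 2) ∩ f ⁻¹' Metric.ball (f x) (ρ / 2),
      mem_nhdsWithin_of_mem_nhds (inter_mem (Metric.ball_mem_nhds x (half_pos hδ))
        (hf.continuousAt (Metric.ball_mem_nhds _ (half_pos hρ)))), ?_⟩
    filter_upwards [Ioo_mem_nhdsGT (half_pos hρ)] with r hr x' hx' y hy
    have h₁ : dist x' x < δ / 2 := hx'.1
    have h₂ : dist (f x') (f x) < ρ / 2 := hx'.2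
    obtain ⟨z, hz, rfl⟩ := hsub (show dist y (f x) < ρ by
      linarith [dist_triangle y (f x') (f x), hr.2])
    refine ⟨z, ?_, rfl⟩
    linarith [dist_triangle_right z x' x, Metric.mem_ball.1 hz]

/-- If points `ε`-close to `g i u` lift through `g i` to points `ε`-close to `u`, then points
`ε`-close to `wcomp g w x` lift through `wcomp g w` to points whose orbit along `w` stays `ε`-close
to that of `x`. -/
theorem exists_shadowing_preimage {X : Type*} [MetricSpace X] {m : ℕ} (g : Fin m → X → X)
    {x : X} {ε : ℝ}
    (hlift : ∀ i u v, dist v (g i u) ≤ ε → ∃ z, g i z = v ∧ dist z u ≤ ε) (w : List (Fin m)) :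
    ∀ y, dist y (wcomp g w x) ≤ ε →
      ∃ z, wcomp g w z = y ∧ ∀ s, s <:+ w → dist (wcomp g s z) (wcomp g s x) ≤ ε := by
  induction w with
  | nil =>
    intro y hy
    refine ⟨y, rfl, fun s hs => ?_⟩
    rw [List.suffix_nil.1 hs]
    exact hy
  | cons i w ih =>
    intro y hy
    obtain ⟨y', rfl, hy'⟩ := hlift i (wcomp g w x) y hy
    obtain ⟨z, rfl, hz⟩ := ih y' hy'
    refine ⟨z, rfl, fun s hs => ?_⟩
    rcases List.suffix_cons_iff.1 hs with rfl | hs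
    · exact hy
    · exact hz s hs

/-- For finitely many surjective, open, distance-expanding maps of a compact
metric space there is `ε₀ > 0` such that for all `0 < ε ≤ ε₀`, every point `x` and every word
`w`, the composition along `w` maps the dynamical ball `B(x,w,ε)` exactly onto the closed ball
of radius `ε` around `wcomp g w x`. -/
theorem expanding_image_of_dynamical_ball
    {X : Type*} [MetricSpace X] [CompactSpace X]
    {m : ℕ} (g : Fin m → X → X) (hg : ∀ i, Continuous (g i))
    (hopen : ∀ i, IsOpenMap (g i)) (hsurj : ∀ i, Function.Surjective (g i))
    (δ₀ lam : ℝ) (hδ₀ : 0 < δ₀) (hlam0 : 0 < lam) (hlam1 : lam < 1)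
    (hexp : ∀ i, ∀ x y : X, dist x y ≤ δ₀ → lam⁻¹ * dist x y ≤ dist (g i x) (g i y)) :
    ∃ ε₀ : ℝ, 0 < ε₀ ∧ ∀ ε : ℝ, 0 < ε → ε ≤ ε₀ → ∀ (x : X) (w : List (Fin m)),
      wcomp g w '' {y : X | ∀ s, s <:+ w → dist (wcomp g s y) (wcomp g s x) ≤ ε}
        = Metric.closedBall (wcomp g w x) ε := by
  obtain ⟨r, hr, hr0⟩ :=
    ((eventually_all.2 fun i => eventually_uniform_lift (hg i) (hopen i) hδ₀).and
      self_mem_nhdsWithin).exists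
  refine ⟨r, hr0, fun ε _ hεr x w => Set.Subset.antisymm ?_ fun y hy => ?_⟩
  · rintro _ ⟨y, hy, rfl⟩
    exact hy w List.suffix_rfl
  · obtain ⟨z, rfl, hz⟩ := exists_shadowing_preimage g (x := x) (ε := ε) (fun i u v huv => by
      obtain ⟨z, hz, rfl⟩ := hr i u v (huv.trans hεr)
      have h := (inv_mul_le_iff₀ hlam0).1 (hexp i z u hz)
      refine ⟨z, rfl, h.trans ((mul_le_of_le_one_left dist_nonneg hlam1.le).trans huv)⟩) w y hy
    exact ⟨z, hz, rfl⟩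
end

section
/- Let (X,d) be a compact metric space in which any two points can be joined by an L-Lipschitz path γ : [0,1] → X for some uniform constant L > 0, and let g_1,…,g_m be continuous self-maps of X such that each g_i is a surjective open map and there are common constants δ_0 > 0 and 0 < λ < 1 with d(g_i(x), g_i(y)) ≥ λ^{-1} d(x,y) whenever d(x,y) ≤ δ_0. Then for every ε > 0 there exists N = N(ε) ∈ ℕ such that \underline{g}_w( B(x,ε) ) = X for every x ∈ X and every word w over {1,…,m} of length at least N, where B(x,ε) is the ball of radius ε about x. -/
/-!
The idea is to lift a path from `wcomp g w x` to `y` through the letters of `w`, contracting it by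
`lam` at each letter. Compactness turns openness of the maps into a uniform radius `η`: whenever
`dist (g i x) y < η`, the point `y` has a preimage within `δ₀` of `x`, which by expansion
lies within `lam * dist (g i x) y` of `x` (`exists_uniform_contracting_lift`).
To avoid lifting continuous paths, sample an `L`-Lipschitz path at `K` equal time steps with
`L / K < η`. Lifting this chain through all letters of `w` (`exists_chain_lift_word`) gives a chain
of `K` steps of size at most `lam ^ w.length * (L / K)`, starting at `x` and ending at a preimage
of `y`; that preimage is within `lam ^ w.length * L` of `x`. The number of steps `K` depends only
on `η`, and the final bound only on the length of `w`.
-/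

open Filter MeasureTheory Topology
open scoped Classical

/-- Openness of `f` is uniform on a compact space: `f` maps every `r`-ball onto a set containing
the `η`-ball around the image of the centre, for all small `η`. -/
lemma eventually_ball_subset_image_ball {X : Type*} [MetricSpace X] [CompactSpace X]
    {f : X → X} (hf : Continuous f) (hopen : IsOpenMap f) {r : ℝ} (hr : 0 < r) :
    ∀ᶠ η in 𝓝 (0 : ℝ), ∀ x : X, Metric.ball (f x) η ⊆ f '' Metric.ball x r := by
  have key : ∀ᶠ η in 𝓝 (0 : ℝ), ∀ x ∈ (Set.univ : Set X),
      Metric.ball (f x) η ⊆ f '' Metric.ball x r := by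
    refine isCompact_univ.eventually_forall_of_forall_eventually ?_
    intro x _
    obtain ⟨ρ, hρ, hsub⟩ := Metric.isOpen_iff.1 (hopen _ (Metric.isOpen_ball (x := x) (ε := r / 2)))
      (f x) ⟨x, Metric.mem_ball_self (by linarith), rfl⟩
    rw [nhds_prod_eq]
    have h1 : ∀ᶠ η in 𝓝 (0 : ℝ), η < ρ / 2 := eventually_lt_nhds (by linarith)
    have h2 : ∀ᶠ x' in 𝓝 x, dist x' x < r / 2 ∧ dist (f x') (f x) < ρ / 2 :=
      (eventually_mem_set.2 (Metric.ball_mem_nhds x (by linarith : 0 < r / 2))).and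
        (hf.continuousAt.eventually (Metric.ball_mem_nhds (f x) (by linarith : 0 < ρ / 2)))
    filter_upwards [h1.prod_mk h2]
    rintro ⟨η, x'⟩ ⟨hη, hx', hfx'⟩ y hy
    simp only at hη hx' hfx' hy
    rw [Metric.mem_ball] at hy
    obtain ⟨z, hz, rfl⟩ := hsub (show y ∈ Metric.ball (f x) ρ by
      rw [Metric.mem_ball]
      linarith [dist_triangle y (f x') (f x)])
    refine ⟨z, ?_, rfl⟩
    rw [Metric.mem_ball] at hz ⊢
    linarith [dist_triangle_right z x' x]
  exact key.mono fun η h x => h x (Set.mem_univ x)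

/-- Below a uniform scale `η`, every `g i` has local right inverses contracting by `lam`. -/
lemma exists_uniform_contracting_lift {X : Type*} [MetricSpace X] [CompactSpace X]
    {m : ℕ} {g : Fin m → X → X} (hg : ∀ i, Continuous (g i)) (hopen : ∀ i, IsOpenMap (g i))
    {δ₀ lam : ℝ} (hδ₀ : 0 < δ₀) (hlam0 : 0 < lam)
    (hexp : ∀ i, ∀ x y : X, dist x y ≤ δ₀ → lam⁻¹ * dist x y ≤ dist (g i x) (g i y)) :
    ∃ η : ℝ, 0 < η ∧ ∀ i x y, dist (g i x) y < η →
      ∃ x', g i x' = y ∧ dist x x' ≤ lam * dist (g i x) y := by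
  have h := eventually_all.2 fun i => eventually_ball_subset_image_ball (hg i) (hopen i) hδ₀
  obtain ⟨η, hη, hη0⟩ :=
    ((h.filter_mono nhdsWithin_le_nhds).and (self_mem_nhdsWithin (s := Set.Ioi (0 : ℝ)))).exists
  refine ⟨η, hη0, fun i x y hxy => ?_⟩
  obtain ⟨x', hx', rfl⟩ := hη i x (Metric.mem_ball'.2 hxy)
  exact ⟨x', rfl, (inv_mul_le_iff₀ hlam0).1 (hexp i x x' (Metric.mem_ball'.1 hx').le)⟩

/-- A chain with steps smaller than `η` lifts through a map with contracting local right inverses,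
starting from any prescribed preimage of its first point. -/
lemma exists_chain_lift {X : Type*} [MetricSpace X] {f : X → X} {η lam s : ℝ} (hlam0 : 0 < lam)
    (hlift : ∀ x y, dist (f x) y < η → ∃ x', f x' = y ∧ dist x x' ≤ lam * dist (f x) y)
    (hs : s < η) (p : ℕ → X) (hp : ∀ k, dist (p k) (p (k + 1)) ≤ s) (x : X) (hx : f x = p 0) :
    ∃ q : ℕ → X, q 0 = x ∧ (∀ k, f (q k) = p k) ∧ ∀ k, dist (q k) (q (k + 1)) ≤ lam * s := by
  choose! l hl using hlift
  let q : ℕ → X := fun n => Nat.rec x (fun k a => l a (p (k + 1))) n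
  have hq : ∀ k, f (q k) = p k := by
    intro k
    induction k with
    | zero => exact hx
    | succ k ih => exact (hl (q k) (p (k + 1)) (by rw [ih]; exact (hp k).trans_lt hs)).1
  refine ⟨q, rfl, hq, fun k => ?_⟩
  have h := (hl (q k) (p (k + 1)) (by rw [hq]; exact (hp k).trans_lt hs)).2
  rw [hq] at h
  exact h.trans (mul_le_mul_of_nonneg_left (hp k) hlam0.le)

lemma exists_chain_lift_word {X : Type*} [MetricSpace X] {m : ℕ} {g : Fin m → X → X}
    {η lam : ℝ} (hlam0 : 0 < lam) (hlam1 : lam < 1)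
    (hlift : ∀ i x y, dist (g i x) y < η → ∃ x', g i x' = y ∧ dist x x' ≤ lam * dist (g i x) y)
    (x : X) (w : List (Fin m)) :
    ∀ (s : ℝ), 0 ≤ s → s < η → ∀ p : ℕ → X, (∀ k, dist (p k) (p (k + 1)) ≤ s) →
      wcomp g w x = p 0 →
      ∃ q : ℕ → X, q 0 = x ∧ (∀ k, wcomp g w (q k) = p k) ∧
        ∀ k, dist (q k) (q (k + 1)) ≤ lam ^ w.length * s := by
  induction w with
  | nil =>
    intro s _ _ p hp hx
    exact ⟨p, hx.symm, fun k => rfl, by simpa using hp⟩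
  | cons i w ih =>
    intro s hs0 hs p hp hx
    obtain ⟨p', h0, hp', hd'⟩ := exists_chain_lift hlam0 (hlift i) hs p hp (wcomp g w x) hx
    obtain ⟨q, hq0, hq, hd⟩ := ih (lam * s) (by positivity) (by nlinarith) p' hd' h0.symm
    refine ⟨q, hq0, fun k => ?_, fun k => (hd k).trans_eq ?_⟩
    · rw [← hp' k, ← hq k]
      rfl
    · rw [List.length_cons]
      ring

/-- An `L`-Lipschitz path sampled at times `k / K`, constant from time `1` on. -/
lemma exists_chain_of_path {X : Type*} [MetricSpace X] {L : ℝ} (hL : 0 < L) {γ : ℝ → X}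
    (hγ : LipschitzOnWith (Real.toNNReal L) γ (Set.Icc 0 1)) {K : ℕ} (hK : 0 < K) :
    ∃ p : ℕ → X, p 0 = γ 0 ∧ p K = γ 1 ∧ ∀ k, dist (p k) (p (k + 1)) ≤ L / K := by
  have hK' : (0 : ℝ) < K := by exact_mod_cast hK
  have hmem : ∀ k : ℕ, min ((k : ℝ) / K) 1 ∈ Set.Icc (0 : ℝ) 1 := fun k =>
    ⟨le_min (by positivity) zero_le_one, min_le_right _ _⟩
  refine ⟨fun k => γ (min ((k : ℝ) / K) 1), by simp, by simp [div_self hK'.ne'], fun k => ?_⟩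
  refine (hγ.dist_le_mul _ (hmem k) _ (hmem (k + 1))).trans ?_
  rw [Real.coe_toNNReal L hL.le, div_eq_mul_inv L]
  refine mul_le_mul_of_nonneg_left ?_ hL.le
  rw [Real.dist_eq]
  refine (abs_min_sub_min_le_max _ _ _ _).trans (max_le ?_ (by simp))
  rw [Nat.cast_succ, ← sub_div, sub_add_cancel_left, abs_div, abs_neg, abs_one, abs_of_pos hK',
    one_div]

/-- For finitely many surjective, open, distance-expanding maps of a compact
metric space in which any two points are joined by an `L`-Lipschitz path, for every `ε > 0`
there is `N` such that the composition along any word of length at least `N` maps any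
`ε`-ball onto the whole space. -/
theorem expanding_uniform_exactness
    {X : Type*} [MetricSpace X] [CompactSpace X]
    (L : ℝ) (hL : 0 < L)
    (hpath : ∀ x y : X, ∃ γ : ℝ → X, LipschitzOnWith (Real.toNNReal L) γ (Set.Icc 0 1) ∧
      γ 0 = x ∧ γ 1 = y)
    {m : ℕ} (g : Fin m → X → X) (hg : ∀ i, Continuous (g i))
    (hopen : ∀ i, IsOpenMap (g i)) (hsurj : ∀ i, Function.Surjective (g i))
    (δ₀ lam : ℝ) (hδ₀ : 0 < δ₀) (hlam0 : 0 < lam) (hlam1 : lam < 1)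
    (hexp : ∀ i, ∀ x y : X, dist x y ≤ δ₀ → lam⁻¹ * dist x y ≤ dist (g i x) (g i y)) :
    ∀ ε : ℝ, 0 < ε → ∃ N : ℕ, ∀ (x : X) (w : List (Fin m)), N ≤ w.length →
      wcomp g w '' Metric.ball x ε = Set.univ := by
  intro ε hε
  obtain ⟨η, hη, hlift⟩ := exists_uniform_contracting_lift hg hopen hδ₀ hlam0 hexp
  obtain ⟨K, hK⟩ := exists_nat_gt (L / η)
  have hK' : (0 : ℝ) < K := (div_pos hL hη).trans hK
  have hstep : L / K < η := (div_lt_comm₀ hη hK').1 hK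
  obtain ⟨N, hN⟩ := exists_pow_lt_of_lt_one (div_pos hε hL) hlam1
  refine ⟨N, fun x w hw => Set.eq_univ_of_forall fun y => ?_⟩
  obtain ⟨γ, hγ, hγ0, hγ1⟩ := hpath (wcomp g w x) y
  obtain ⟨p, hp0, hpK, hp⟩ := exists_chain_of_path hL hγ (K := K) (by exact_mod_cast hK')
  obtain ⟨q, hq0, hq, hd⟩ := exists_chain_lift_word hlam0 hlam1 hlift x w (L / K)
    (by positivity) hstep p hp (by rw [hp0, hγ0])
  refine ⟨q K, ?_, by rw [hq, hpK, hγ1]⟩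
  rw [Metric.mem_ball', ← hq0]
  calc dist (q 0) (q K)
      ≤ ∑ k ∈ Finset.range K, dist (q k) (q (k + 1)) := dist_le_range_sum_dist q K
    _ ≤ ∑ _k ∈ Finset.range K, lam ^ w.length * (L / K) := Finset.sum_le_sum fun k _ => hd k
    _ = lam ^ w.length * L := by
        rw [Finset.sum_const, Finset.card_range, nsmul_eq_mul]
        field_simp
    _ ≤ lam ^ N * L :=
        mul_le_mul_of_nonneg_right (pow_le_pow_of_le_one hlam0.le hlam1.le hw) hL.le
    _ < ε := (lt_div_iff₀ hL).1 hN
end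

section
/- Let (X,d) be a compact metric space and let g_1,…,g_m be continuous self-maps of X for which there are common constants δ_0 > 0 and 0 < λ < 1 with d(g_i(x), g_i(y)) ≥ λ^{-1} d(x,y) whenever d(x,y) ≤ δ_0. Then the generated semigroup action is strongly δ*-expansive with δ* = δ_0/2: for every γ > 0 there exists k ≥ 1 such that for all x,y ∈ X with d(x,y) ≥ γ and every word w of length k over {1,…,m}, d_w(x,y) > δ*. -/
/-!
As long as two orbits stay within `δ₀` of each other along a word, each further letter multiplies
their distance by at least `lam⁻¹ > 1`. So if `d_w(x, y) ≤ δ₀ / 2` for a word of length `k`, then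
`lam⁻¹ ^ k * d(x, y) ≤ d(g_w x, g_w y) ≤ δ₀ / 2` (`pow_mul_dist_le_of_dynDist_le`), which fails for
all `x, y` with `γ ≤ d(x, y)` once `k` is chosen with `lam⁻¹ ^ k > δ₀ / 2 / γ`.
-/

open Filter MeasureTheory Topology
open scoped Classical

/-- Strong `δ`-expansiveness of the semigroup action: any two `γ`-separated points are
`δ`-separated along every word of some fixed length `k = k(γ)`. -/
def StronglyExpansive {m : ℕ} {X : Type*} [MetricSpace X] (g : Fin m → X → X) (δ : ℝ) : Prop :=
  ∀ γ : ℝ, 0 < γ → ∃ k : ℕ, 1 ≤ k ∧ ∀ x y : X, γ ≤ dist x y →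
    ∀ w : List (Fin m), w.length = k → δ < dynDist g w x y

theorem dynDist_cons {m : ℕ} {X : Type*} [MetricSpace X] (g : Fin m → X → X)
    (i : Fin m) (w : List (Fin m)) (x y : X) :
    dynDist g (i :: w) x y =
      max (dist (wcomp g (i :: w) x) (wcomp g (i :: w) y)) (dynDist g w x y) := by
  simp [dynDist]

theorem dist_wcomp_le_dynDist {m : ℕ} {X : Type*} [MetricSpace X] (g : Fin m → X → X)
    (w : List (Fin m)) (x y : X) :
    dist (wcomp g w x) (wcomp g w y) ≤ dynDist g w x y := by
  cases w with
  | nil => simp [dynDist]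
  | cons i w => rw [dynDist_cons]; exact le_max_left _ _

/-- Orbits that stay `δ`-close along `w` are separated exponentially in the length of `w`. -/
theorem pow_mul_dist_le_of_dynDist_le {m : ℕ} {X : Type*} [MetricSpace X] (g : Fin m → X → X)
    {δ c : ℝ} (hc : 0 ≤ c)
    (hexp : ∀ i, ∀ x y : X, dist x y ≤ δ → c * dist x y ≤ dist (g i x) (g i y))
    (x y : X) (w : List (Fin m)) (hw : dynDist g w x y ≤ δ) :
    c ^ w.length * dist x y ≤ dist (wcomp g w x) (wcomp g w y) := by
  induction w with
  | nil => simp [wcomp]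
  | cons i w ih =>
    rw [dynDist_cons] at hw
    have hw' : dynDist g w x y ≤ δ := (le_max_right _ _).trans hw
    calc c ^ (i :: w).length * dist x y = c * (c ^ w.length * dist x y) := by
          rw [List.length_cons]; ring
      _ ≤ c * dist (wcomp g w x) (wcomp g w y) := mul_le_mul_of_nonneg_left (ih hw') hc
      _ ≤ dist (wcomp g (i :: w) x) (wcomp g (i :: w) y) :=
          hexp i _ _ ((dist_wcomp_le_dynDist g w x y).trans hw')

/-- A semigroup generated by finitely many distance-expanding maps of a
compact metric space is strongly `δ₀/2`-expansive. -/
theorem expanding_semigroup_strongly_expansive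
    {X : Type*} [MetricSpace X] [CompactSpace X]
    {m : ℕ} (g : Fin m → X → X)
    (δ₀ lam : ℝ) (hδ₀ : 0 < δ₀) (hlam0 : 0 < lam) (hlam1 : lam < 1)
    (hexp : ∀ i, ∀ x y : X, dist x y ≤ δ₀ → lam⁻¹ * dist x y ≤ dist (g i x) (g i y)) :
    StronglyExpansive g (δ₀ / 2) := by
  intro γ hγ
  have hc : 1 < lam⁻¹ := (one_lt_inv₀ hlam0).2 hlam1
  obtain ⟨n, hn⟩ := pow_unbounded_of_one_lt (δ₀ / 2 / γ) hc
  -- The exponent is raised by one because a word of positive length is required.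
  have hk : δ₀ / 2 < lam⁻¹ ^ (n + 1) * γ :=
    (div_lt_iff₀ hγ).1 (hn.trans (pow_lt_pow_right₀ hc n.lt_succ_self))
  refine ⟨n + 1, n.succ_pos, fun x y hxy w hw => ?_⟩
  by_contra! hle
  have h := pow_mul_dist_le_of_dynDist_le g (by positivity) hexp x y w (by linarith)
  rw [hw] at h
  have h1 : lam⁻¹ ^ (n + 1) * γ ≤ lam⁻¹ ^ (n + 1) * dist x y :=
    mul_le_mul_of_nonneg_left hxy (by positivity)
  linarith [dist_wcomp_le_dynDist g w x y]
end
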